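/- Let n ≥ 2, let e be an (n−2)-cell of the n-dimensional cubical grid, and let L be an L-block centered on e, regarded as a digital n-object. Then the number of free (n−1)-cells of L that are bounded by e equals 2. -/

import Mathlib

/-! The `(n-2)`-cell `e` has exactly two even coordinates `a` and `b`. If `f` is a free
`(n-1)`-cell of `L = Block e \ {v}` with `e < f`, then some voxel bounded by `f` lies outside `L`;
it is bounded by `e` too, so it is `v`. The single even coordinate of `f` is even in `e`, hence
is `a` or `b`, and at every other coordinate `f` agrees with `v`. So `f` is one of the two facets
of `v` obtained by resetting coordinate `a` or `b` to its value in `e`. Conversely both of these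
are free cells of `L`: they bound `v ∉ L`, and they bound the reflection of `v` across them, which
is in `L`. -/

namespace DigitalGeometry

/-- The dimension of a cell of the cubical grid (doubled coordinates):
the number of odd coordinates. -/
def cdim {n : ℕ} (c : Fin n → ℤ) : ℕ :=
  (Finset.univ.filter fun j => Odd (c j)).card

/-- The bounding relation `e < f` between cells of the grid. -/
def Bounds {n : ℕ} (e f : Fin n → ℤ) : Prop :=
  cdim e < cdim f ∧ ∀ j, e j = f j ∨ (Odd (f j) ∧ |e j - f j| = 1)

/-- A voxel is an `n`-cell: all coordinates odd. -/
def IsVoxel {n : ℕ} (v : Fin n → ℤ) : Prop := ∀ j, Odd (v j)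

/-- The `i`-block centered on an `i`-cell `e`: all voxels bounded by `e`. -/
def Block {n : ℕ} (e : Fin n → ℤ) : Set (Fin n → ℤ) :=
  {v | IsVoxel v ∧ Bounds e v}

/-- `Cells D i` : the `i`-cells of the object `D` (for `i < n` those bounding
some voxel of `D`; for `i = n` it is `D` itself). -/
def Cells {n : ℕ} (D : Set (Fin n → ℤ)) (i : ℕ) : Set (Fin n → ℤ) :=
  {e | cdim e = i ∧ (e ∈ D ∨ ∃ v ∈ D, Bounds e v)}

/-- `c_i(D)` : the number of `i`-cells of `D`. -/
noncomputable def cCount {n : ℕ} (D : Set (Fin n → ℤ)) (i : ℕ) : ℕ := (Cells D i).ncard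

/-- The free `i`-cells of `D`: those whose `i`-block is not contained in `D`. -/
def FreeCells {n : ℕ} (D : Set (Fin n → ℤ)) (i : ℕ) : Set (Fin n → ℤ) :=
  {e | e ∈ Cells D i ∧ ¬ Block e ⊆ D}

/-- `c*_i(D)` : the number of free `i`-cells of `D`. -/
noncomputable def cStar {n : ℕ} (D : Set (Fin n → ℤ)) (i : ℕ) : ℕ := (FreeCells D i).ncard

/-- The non-free `i`-cells of `D`. -/
def NonFreeCells {n : ℕ} (D : Set (Fin n → ℤ)) (i : ℕ) : Set (Fin n → ℤ) :=
  {e | e ∈ Cells D i ∧ Block e ⊆ D}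

/-- `c'_i(D)` : the number of non-free `i`-cells of `D`. -/
noncomputable def cPrime {n : ℕ} (D : Set (Fin n → ℤ)) (i : ℕ) : ℕ := (NonFreeCells D i).ncard

/-- `InterCell v1 v2 e` : the intersection of the voxels `v1`, `v2`
(as subsets of `ℝ^n`) equals the cell `e`. -/
def InterCell {n : ℕ} (v1 v2 e : Fin n → ℤ) : Prop :=
  ∀ j, (v1 j = v2 j ∧ e j = v1 j) ∨
       (e j + 1 = max (v1 j) (v2 j) ∧ e j - 1 = min (v1 j) (v2 j))

/-- `e` is an `(n-2)`-hub of `D`, i.e. `D` has an `(n-2)`-gap over `e`. -/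
def IsHub {n : ℕ} (D : Set (Fin n → ℤ)) (e : Fin n → ℤ) : Prop :=
  cdim e = n - 2 ∧ ∃ v1 v2 : Fin n → ℤ, v1 ≠ v2 ∧
    Block e ∩ D = {v1, v2} ∧ InterCell v1 v2 e

/-- `g_{n-2}(D)` : the number of `(n-2)`-gaps of `D`. -/
noncomputable def gapCount {n : ℕ} (D : Set (Fin n → ℤ)) : ℕ := {e | IsHub D e}.ncard

/-- `b_j(e, D)` : the number of free `j`-cells of `D` bounded by `e`. -/
noncomputable def bcount {n : ℕ} (e : Fin n → ℤ) (D : Set (Fin n → ℤ)) (j : ℕ) : ℕ :=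
  {f | f ∈ FreeCells D j ∧ Bounds e f}.ncard

/-- Two voxels are `i`-adjacent if they are distinct and their intersection
contains an `i`-cell. -/
def Adj {n : ℕ} (i : ℕ) (v1 v2 : Fin n → ℤ) : Prop :=
  v1 ≠ v2 ∧ ∃ e : Fin n → ℤ, cdim e = i ∧ Bounds e v1 ∧ Bounds e v2

theorem card_even_add_cdim {n : ℕ} (c : Fin n → ℤ) :
    (Finset.univ.filter fun j => ¬ Odd (c j)).card + cdim c = n := by
  have h := Finset.card_filter_add_card_filter_not (s := (Finset.univ : Finset (Fin n)))
    (fun j => Odd (c j))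
  rw [Finset.card_univ, Fintype.card_fin] at h
  unfold cdim
  omega

theorem Bounds.eq_of_odd {n : ℕ} {e f : Fin n → ℤ} (h : Bounds e f) {j : Fin n}
    (hj : Odd (e j)) : e j = f j := by
  rcases h.2 j with h | ⟨⟨k, hk⟩, h⟩
  · exact h
  · obtain ⟨m, hm⟩ := hj
    rcases (abs_eq (by norm_num : (0 : ℤ) ≤ 1)).1 h with h | h <;> omega

theorem Bounds.eq_of_not_odd {n : ℕ} {e f : Fin n → ℤ} (h : Bounds e f) {j : Fin n}
    (hj : ¬ Odd (f j)) : e j = f j := by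
  rcases h.2 j with h | h
  · exact h
  · exact absurd h.1 hj

theorem Bounds.trans {n : ℕ} {e f g : Fin n → ℤ} (h : Bounds e f) (h' : Bounds f g) :
    Bounds e g := by
  refine ⟨h.1.trans h'.1, fun j => ?_⟩
  rcases h.2 j with h1 | h1
  · rw [h1]; exact h'.2 j
  · rw [← h'.eq_of_odd h1.1]; exact Or.inr h1

theorem cdim_voxel {n : ℕ} {v : Fin n → ℤ} (hv : IsVoxel v) : cdim v = n := by
  unfold cdim
  rw [Finset.filter_true_of_mem (fun j _ => hv j), Finset.card_univ, Fintype.card_fin]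

theorem cdim_update_voxel {n : ℕ} {v : Fin n → ℤ} (hv : IsVoxel v) {a : Fin n} {x : ℤ}
    (hx : ¬ Odd x) : cdim (Function.update v a x) = n - 1 := by
  have h := card_even_add_cdim (Function.update v a x)
  have h1 : (Finset.univ.filter fun j => ¬ Odd (Function.update v a x j)) = {a} := by
    ext j
    by_cases hj : j = a
    · subst hj; simpa using hx
    · simp [hj, hv j]
  rw [h1, Finset.card_singleton] at h
  omega

/-- The facet of `v` obtained by resetting an even coordinate `a` of `e` is a free cell of the
block with `v` removed, and is bounded by `e`. -/
theorem facet_mem {n : ℕ} (hn : 2 ≤ n) {e : Fin n → ℤ} (he : cdim e = n - 2) {v : Fin n → ℤ}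
    (hv : v ∈ Block e) {a : Fin n} (ha : ¬ Odd (e a)) :
    Function.update v a (e a) ∈ FreeCells (Block e \ {v}) (n - 1) ∧
      Bounds e (Function.update v a (e a)) := by
  obtain ⟨hvox, hb⟩ := hv
  have hd := cdim_update_voxel hvox (a := a) ha
  have hva : Odd (v a) ∧ |e a - v a| = 1 := by
    rcases hb.2 a with h | h
    · exact absurd (h ▸ hvox a) ha
    · exact h
  have hef : Bounds e (Function.update v a (e a)) := by
    refine ⟨by omega, fun j => ?_⟩
    by_cases hj : j = a
    · subst hj; simp
    · simpa [hj] using hb.2 j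
  have hfv : Bounds (Function.update v a (e a)) v := by
    refine ⟨by rw [hd, cdim_voxel hvox]; omega, fun j => ?_⟩
    by_cases hj : j = a
    · subst hj; simpa using Or.inr hva
    · simp [hj]
  -- `w` is the reflection of `v` across the facet.
  obtain ⟨w, hw⟩ : ∃ w, w = Function.update v a (2 * e a - v a) := ⟨_, rfl⟩
  have hwa : Odd (2 * e a - v a) := by
    obtain ⟨k, hk⟩ := hva.1
    exact ⟨e a - k - 1, by omega⟩
  have hwvox : IsVoxel w := by
    intro j
    by_cases hj : j = a
    · subst hj; simpa [hw] using hwa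
    · simpa [hw, hj] using hvox j
  have hfw : Bounds (Function.update v a (e a)) w := by
    refine ⟨by rw [hd, cdim_voxel hwvox]; omega, fun j => ?_⟩
    by_cases hj : j = a
    · subst hj
      refine Or.inr ⟨hwvox j, ?_⟩
      have h1 : e j - (2 * e j - v j) = -(e j - v j) := by ring
      simp only [hw, Function.update_self]
      rw [h1, abs_neg]
      exact hva.2
    · simp [hw, hj]
  have hwv : w ≠ v := by
    intro h
    have h1 := congrFun h a
    simp only [hw, Function.update_self] at h1
    have h2 : e a = v a := by omega
    exact ha (h2 ▸ hva.1)
  refine ⟨⟨⟨hd, Or.inr ⟨w, ⟨⟨hwvox, hef.trans hfw⟩, hwv⟩, hfw⟩⟩, fun h => ?_⟩, hef⟩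
  exact (h ⟨hvox, hfv⟩).2 rfl

/-- Every free `(n-1)`-cell of the block with `v` removed that is bounded by `e` is a facet of
`v` through `e`. -/
theorem eq_facet_of_mem {n : ℕ} (hn : 2 ≤ n) {e v f : Fin n → ℤ}
    (hf : f ∈ FreeCells (Block e \ {v}) (n - 1)) (hef : Bounds e f) :
    ∃ a, ¬ Odd (e a) ∧ f = Function.update v a (e a) := by
  obtain ⟨⟨hd, -⟩, hfree⟩ := hf
  obtain ⟨w, ⟨hwvox, hfw⟩, hw⟩ := Set.not_subset.1 hfree
  have hwv : w = v := by
    by_contra h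
    exact hw ⟨⟨hwvox, hef.trans hfw⟩, h⟩
  subst hwv
  have hc := card_even_add_cdim f
  obtain ⟨a, ha⟩ := Finset.card_eq_one.1
    (show (Finset.univ.filter fun j => ¬ Odd (f j)).card = 1 by omega)
  have key : ∀ j, ¬ Odd (f j) ↔ j = a := fun j => by
    have := Finset.ext_iff.1 ha j
    simpa using this
  have hfa : ¬ Odd (f a) := (key a).2 rfl
  have hea := hef.eq_of_not_odd hfa
  refine ⟨a, hea ▸ hfa, ?_⟩
  funext j
  by_cases hj : j = a
  · subst hj; simp [hea]
  · rw [Function.update_of_ne hj]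
    exact hfw.eq_of_odd (not_not.1 fun h => hj ((key j).1 h))

/-- If `e` is the center of an `L`-block `L`, then exactly `2` free
`(n-1)`-cells of `L` are bounded by `e`. -/
theorem bcount_in_Lblock (n : ℕ) (hn : 2 ≤ n) (e : Fin n → ℤ)
    (he : cdim e = n - 2) (v : Fin n → ℤ) (hv : v ∈ Block e) :
    bcount e (Block e \ {v}) (n - 1) = 2 := by
  have hc := card_even_add_cdim e
  obtain ⟨a, b, hab, hs⟩ := Finset.card_eq_two.1
    (show (Finset.univ.filter fun j => ¬ Odd (e j)).card = 2 by omega)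
  have key : ∀ j, ¬ Odd (e j) ↔ j = a ∨ j = b := fun j => by
    have := Finset.ext_iff.1 hs j
    simpa using this
  have ha : ¬ Odd (e a) := (key a).2 (Or.inl rfl)
  have hb : ¬ Odd (e b) := (key b).2 (Or.inr rfl)
  have hset : {f | f ∈ FreeCells (Block e \ {v}) (n - 1) ∧ Bounds e f} =
      {Function.update v a (e a), Function.update v b (e b)} := by
    ext f
    constructor
    · rintro ⟨hf, hef⟩
      obtain ⟨j, hj, rfl⟩ := eq_facet_of_mem hn hf hef
      rcases (key j).1 hj with rfl | rfl
      · exact Or.inl rfl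
      · exact Or.inr rfl
    · rintro (rfl | rfl)
      · exact facet_mem hn he hv ha
      · exact facet_mem hn he hv hb
  unfold bcount
  rw [hset]
  refine Set.ncard_pair fun h => ?_
  -- The two facets differ at `a`: one has the even value `e a` there, the other the odd `v a`.
  have h1 := congrFun h a
  rw [Function.update_self, Function.update_of_ne hab] at h1
  exact ha (h1 ▸ hv.1 a)

end DigitalGeometry
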